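/- Let ℓ be an odd prime. For each k ≥ 1 let 𝒜_{ℓᵏ,S} = {(τ, τ') ∈ GL₂(ℤ/ℓᵏℤ)² | det τ = det τ'} and 𝒜ᵗ_{ℓᵏ,S} = {(τ, τ') ∈ GL₂(ℤ/ℓᵏℤ)² | τ and τ' have the same characteristic polynomial}. Then the sequence k ↦ ℓᵏ · #𝒜ᵗ_{ℓᵏ,S} / #𝒜_{ℓᵏ,S} (a sequence of real numbers) converges as k → ∞ to ℓ²(ℓ³ + ℓ² − ℓ − 2)/((ℓ² − 1)²(ℓ + 1)). -/

import Mathlib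

open Matrix Filter

/-!
In suitable coordinates, a pair of `2 × 2` matrices with equal trace is a triple `(s, x, y)` with a
scalar `s` and `x, y ∈ R³`, and the determinants agree exactly when `x ⬝ᵥ y = 0`. A solution modulo
`ℓᵏ` that is nonzero modulo `ℓ` has a unit coordinate, so the equation is linear in the dual
coordinate and all such solutions modulo `ℓ` have the same number of lifts. A solution that
vanishes modulo `ℓ` is `ℓ` times a solution modulo `ℓᵏ⁻²`, since `(ℓx) ⬝ᵥ (ℓy) = ℓ²(x ⬝ᵥ y)`.
The resulting two-step recursion has a closed form. Invertibility only depends on the reduction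
modulo `ℓ`, so it remains to count the singular pairs with equal trace over the field with `ℓ`
elements.
-/

section Fibers

lemma ncard_mul_eq_of_mapsTo {α β : Type*} [Finite α] [Finite β] {s : Set α} {t : Set β}
    {f : α → β} (hf : Set.MapsTo f s t) {m n : ℕ}
    (h : ∀ b ∈ t, {a ∈ s | f a = b}.ncard * m = n) : s.ncard * m = t.ncard * n := by
  classical
  have := Fintype.ofFinite α
  have := Fintype.ofFinite β
  have hmaps : ∀ a ∈ s.toFinset, f a ∈ t.toFinset := by simpa using fun a ha ↦ hf ha
  have hfiber : ∀ b ∈ t.toFinset, (s.toFinset.filter (f · = b)).card * m = n := fun b hb ↦ by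
    rw [← h b (by simpa using hb), ← Set.ncard_coe_finset]
    simp
  rw [Set.ncard_eq_toFinset_card' s, Set.ncard_eq_toFinset_card' t,
    Finset.card_eq_sum_card_fiberwise hmaps, Finset.sum_mul, Finset.sum_congr rfl hfiber,
    Finset.sum_const, smul_eq_mul]

variable {G H : Type*} [AddGroup G] [AddGroup H]

lemma ncard_fiber_eq_card_ker (f : G →+ H) (a : G) :
    {x | f x = f a}.ncard = Nat.card f.ker := by
  have hfiber : {x | f x = f a} = (a + ·) '' (f.ker : Set G) := by
    ext x
    simp only [Set.mem_ofPred_eq, Set.image_add_left, Set.mem_preimage, SetLike.mem_coe,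
      AddMonoidHom.mem_ker, map_add, map_neg, neg_add_eq_zero]
    exact eq_comm
  rw [hfiber, Set.ncard_image_of_injective _ (add_right_injective a)]
  rfl

variable [Finite G] [Finite H]

lemma ncard_preimage_mul_card_range (f : G →+ H) (t : Set H) :
    (f ⁻¹' t).ncard * Nat.card f.range = Nat.card G * (t ∩ f.range).ncard := by
  rw [mul_comm (Nat.card G)]
  have hmaps : Set.MapsTo f (f ⁻¹' t) (t ∩ f.range) := fun a ha ↦ ⟨ha, a, rfl⟩
  refine ncard_mul_eq_of_mapsTo hmaps ?_
  rintro _ ⟨ht, a, rfl⟩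
  have hfiber : {x ∈ f ⁻¹' t | f x = f a} = {x | f x = f a} :=
    Set.ext fun x ↦ and_iff_right_of_imp fun hx ↦ show f x ∈ t from hx ▸ ht
  rw [hfiber, ncard_fiber_eq_card_ker, ← AddSubgroup.index_ker f]
  exact f.ker.card_mul_index

lemma ncard_preimage_mul_card {f : G →+ H} (hf : Function.Surjective f) (t : Set H) :
    (f ⁻¹' t).ncard * Nat.card H = Nat.card G * t.ncard := by
  simpa [AddMonoidHom.range_eq_top.mpr hf] using ncard_preimage_mul_card_range f t

end Fibers

section OrthogonalPairs

/-- The pairs of vectors `(x, y)` over `R` with `x ⬝ᵥ y = 0`: the points of the split quadratic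
cone of rank `2 * card ι`. -/
def orthogonalPairs (ι R : Type*) [Fintype ι] [CommRing R] : Set ((ι → R) × (ι → R)) :=
  {z | z.1 ⬝ᵥ z.2 = 0}

/-- A ring homomorphism applied to every coordinate of a pair of vectors. -/
def pairMap (ι : Type*) {R S : Type*} [CommRing R] [CommRing S] (f : R →+* S) :
    (ι → R) × (ι → R) →+* (ι → S) × (ι → S) :=
  (f.compLeft ι).prodMap (f.compLeft ι)

variable {ι R S K : Type*} [CommRing R] [CommRing S] [Field K]

lemma pairMap_apply (f : R →+* S) (z : (ι → R) × (ι → R)) :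
    pairMap ι f z = (f ∘ z.1, f ∘ z.2) := rfl

lemma pairMap_eq_zero_iff_exists_smul {f : R →+* S} {ϖ : R} (hker : ∀ a, f a = 0 ↔ ϖ ∣ a)
    {z : (ι → R) × (ι → R)} : pairMap ι f z = 0 ↔ ∃ w : (ι → R) × (ι → R), ϖ • w = z := by
  simp only [pairMap_apply, Prod.ext_iff, Prod.fst_zero, Prod.snd_zero, funext_iff,
    Function.comp_apply, Pi.zero_apply, hker]
  constructor
  · rintro ⟨hx, hy⟩
    choose x hx using hx
    choose y hy using hy
    exact ⟨(x, y), fun i ↦ (hx i).symm, fun i ↦ (hy i).symm⟩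
  · rintro ⟨w, hx, hy⟩
    exact ⟨fun i ↦ ⟨w.1 i, (hx i).symm⟩, fun i ↦ ⟨w.2 i, (hy i).symm⟩⟩

lemma pairMap_surjective {f : R →+* S} (hf : Function.Surjective f) :
    Function.Surjective (pairMap ι f) :=
  Function.Surjective.prodMap hf.comp_left hf.comp_left

/-- The translates of a vector by vectors with coordinates in the kernel of `f`, which parametrize
the vectors with the same image under `f`. -/
def kerTranslate (f : R →+* S) (y : ι → R) (z : ι → RingHom.ker f) : ι → R :=
  fun i ↦ y i + z i

lemma kerTranslate_injective (f : R →+* S) (y : ι → R) :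
    Function.Injective (kerTranslate f y) := fun z w h ↦ by
  ext i
  simpa [kerTranslate] using congrFun h i

lemma range_kerTranslate (f : R →+* S) (y : ι → R) :
    Set.range (kerTranslate f y) = {y' | f ∘ y' = f ∘ y} := by
  ext y'
  simp only [Set.mem_range, Set.mem_ofPred_eq, funext_iff, Function.comp_apply, kerTranslate]
  refine ⟨?_, fun h ↦ ⟨fun i ↦ ⟨y' i - y i, by simp [RingHom.mem_ker, h i]⟩, by simp⟩⟩
  rintro ⟨z, hz⟩ i
  rw [← hz i, map_add, (z i).2, add_zero]

variable [Fintype ι]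

lemma zero_mem_orthogonalPairs : (0 : (ι → R) × (ι → R)) ∈ orthogonalPairs ι R :=
  zero_dotProduct 0

lemma pairMap_mem_orthogonalPairs_iff (f : R →+* S) (z : (ι → R) × (ι → R)) :
    pairMap ι f z ∈ orthogonalPairs ι S ↔ f (z.1 ⬝ᵥ z.2) = 0 := by
  rw [RingHom.map_dotProduct]; rfl

lemma pairMap_mem_orthogonalPairs {f : R →+* S} {z : (ι → R) × (ι → R)}
    (hz : z ∈ orthogonalPairs ι R) : pairMap ι f z ∈ orthogonalPairs ι S := by
  rw [pairMap_mem_orthogonalPairs_iff, show z.1 ⬝ᵥ z.2 = 0 from hz, map_zero]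

lemma swap_mem_orthogonalPairs_iff {z : (ι → R) × (ι → R)} :
    z.swap ∈ orthogonalPairs ι R ↔ z ∈ orthogonalPairs ι R := by
  simp only [orthogonalPairs, Set.mem_ofPred_eq, Prod.fst_swap, Prod.snd_swap, dotProduct_comm]

lemma ncard_sum_smul_eq_mul_card {M : Type*} [AddCommGroup M] [Module R M] [Finite M]
    {x : ι → R} {i : ι} (hx : IsUnit (x i)) (m : M) :
    {z : ι → M | ∑ j, x j • z j = m}.ncard * Nat.card M = Nat.card M ^ Fintype.card ι := by
  classical
  let f : (ι → M) →+ M := (∑ j, x j • LinearMap.proj (R := R) (φ := fun _ ↦ M) j).toAddMonoidHom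
  have hf_apply (z) : f z = ∑ j, x j • z j := by simp [f]
  have hf : Function.Surjective f := fun m ↦ by
    obtain ⟨u, hu⟩ := hx
    refine ⟨Pi.single i (u⁻¹ • m), ?_⟩
    rw [hf_apply, Finset.sum_eq_single i (by simp +contextual) (by simp), ← hu, Pi.single_eq_same]
    exact smul_inv_smul u m
  simpa [Set.preimage, hf_apply, Nat.card_fun] using ncard_preimage_mul_card hf {m}

lemma ncard_comp_eq [Finite R] {f : R →+* S} (hf : Function.Surjective f) (x : ι → S) :
    {y : ι → R | f ∘ y = x}.ncard = Nat.card (RingHom.ker f) ^ Fintype.card ι := by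
  obtain ⟨y, rfl⟩ := hf.comp_left x
  rw [← range_kerTranslate, ← Set.image_univ,
    Set.ncard_image_of_injective _ (kerTranslate_injective f y), Set.ncard_univ, Nat.card_fun,
    Nat.card_eq_fintype_card (α := ι)]

lemma ncard_pairMap_eq [Finite R] {f : R →+* S} (hf : Function.Surjective f)
    (z₀ : (ι → S) × (ι → S)) :
    {z | pairMap ι f z = z₀}.ncard = Nat.card (RingHom.ker f) ^ (2 * Fintype.card ι) := by
  have hprod : {z | pairMap ι f z = z₀} = {x | f ∘ x = z₀.1} ×ˢ {y | f ∘ y = z₀.2} := by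
    ext z
    simp [pairMap_apply, Prod.ext_iff]
  rw [hprod, Set.ncard_prod, ncard_comp_eq hf, ncard_comp_eq hf, ← pow_add, two_mul]

lemma ncard_dotProduct_eq_zero_lifts_mul_card_ker [Finite R] {f : R →+* S}
    (hf : Function.Surjective f) {x : ι → R} {i : ι} (hx : IsUnit (x i)) {y₀ : ι → S}
    (hy₀ : (f ∘ x) ⬝ᵥ y₀ = 0) :
    {y : ι → R | x ⬝ᵥ y = 0 ∧ f ∘ y = y₀}.ncard * Nat.card (RingHom.ker f) =
      Nat.card (RingHom.ker f) ^ Fintype.card ι := by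
  obtain ⟨y, rfl⟩ := hf.comp_left y₀
  have hmem : -(x ⬝ᵥ y) ∈ RingHom.ker f := by
    rw [neg_mem_iff, RingHom.mem_ker, RingHom.map_dotProduct, hy₀]
  have himage : {y' : ι → R | x ⬝ᵥ y' = 0 ∧ f ∘ y' = f ∘ y} =
      kerTranslate f y '' {z | ∑ j, x j • z j = ⟨-(x ⬝ᵥ y), hmem⟩} := by
    have hpreimage : {z | ∑ j, x j • z j = ⟨-(x ⬝ᵥ y), hmem⟩} =
        kerTranslate f y ⁻¹' {y' | x ⬝ᵥ y' = 0} := by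
      ext z
      simp [Subtype.ext_iff, kerTranslate, dotProduct, mul_add, Finset.sum_add_distrib,
        eq_neg_iff_add_eq_zero, add_comm]
    rw [hpreimage, Set.image_preimage_eq_inter_range, range_kerTranslate]
    rfl
  rw [himage, Set.ncard_image_of_injective _ (kerTranslate_injective f y),
    ncard_sum_smul_eq_mul_card hx]

/-- The pairs of orthogonal vectors over `R` which vanish under `f`. -/
def orthogonalPairsKer (ι : Type*) [Fintype ι] (f : R →+* S) : Set ((ι → R) × (ι → R)) :=
  {z ∈ orthogonalPairs ι R | pairMap ι f z = 0}

lemma ncard_orthogonalPairsKer_mul {T : Type*} [CommRing T] [Finite R] [Finite S]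
    {f : R →+* T} {g : R →+* S} (hf : Function.Surjective f) (hg : Function.Surjective g) {ϖ : R}
    (hker : ∀ a, f a = 0 ↔ ϖ ∣ a) (hann : ∀ a, g a = 0 ↔ ϖ ^ 2 * a = 0) :
    (orthogonalPairsKer ι f).ncard * Nat.card S ^ (2 * Fintype.card ι) =
      (orthogonalPairs ι S).ncard * Nat.card (RingHom.ker f) ^ (2 * Fintype.card ι) := by
  let m : (ι → R) × (ι → R) →+ (ι → R) × (ι → R) := DistribSMul.toAddMonoidHom _ ϖ
  have hm_apply (z) : m z = ϖ • z := rfl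
  have hrange : (m.range : Set ((ι → R) × (ι → R))) = {z | pairMap ι f z = 0} :=
    Set.ext fun z ↦ (pairMap_eq_zero_iff_exists_smul hker).symm
  have hpreimage : m ⁻¹' orthogonalPairs ι R = pairMap ι g ⁻¹' orthogonalPairs ι S := by
    ext z
    rw [Set.mem_preimage (f := pairMap ι g), pairMap_mem_orthogonalPairs_iff, hann]
    simp [orthogonalPairs, hm_apply, pow_two, mul_assoc]
  have hcard_range : Nat.card m.range = Nat.card (RingHom.ker f) ^ (2 * Fintype.card ι) := by
    rw [← ncard_pairMap_eq hf 0, ← hrange]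
    rfl
  have hm := ncard_preimage_mul_card_range m (orthogonalPairs ι R)
  have hgS := ncard_preimage_mul_card (f := (pairMap ι g).toAddMonoidHom) (pairMap_surjective hg)
    (orthogonalPairs ι S)
  have hcard_S : Nat.card ((ι → S) × (ι → S)) = Nat.card S ^ (2 * Fintype.card ι) := by
    rw [Nat.card_prod, Nat.card_fun, ← pow_add, ← two_mul, Nat.card_eq_fintype_card (α := ι)]
  rw [hrange, hpreimage, hcard_range] at hm
  change _ = _ * (orthogonalPairsKer ι f).ncard at hm
  rw [hcard_S] at hgS
  have hpos : Nat.card ((ι → R) × (ι → R)) ≠ 0 := Nat.card_pos.ne'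
  apply mul_left_cancel₀ hpos
  rw [← mul_assoc, ← hm, ← mul_assoc, ← hgS]
  exact mul_right_comm _ _ _

variable [Finite R] {π : R →+* K} [IsLocalHom π]

lemma ncard_orthogonalPairs_lifts_mul_card_ker_of_fst_ne_zero (hπ : Function.Surjective π)
    {z₀ : (ι → K) × (ι → K)} (hz₀ : z₀ ∈ orthogonalPairs ι K) (hne : z₀.1 ≠ 0) :
    {z ∈ orthogonalPairs ι R | pairMap ι π z = z₀}.ncard * Nat.card (RingHom.ker π) =
      Nat.card (RingHom.ker π) ^ (2 * Fintype.card ι) := by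
  obtain ⟨i, hi⟩ := Function.ne_iff.mp hne
  have hmaps : Set.MapsTo Prod.fst {z ∈ orthogonalPairs ι R | pairMap ι π z = z₀}
      {x | π ∘ x = z₀.1} := fun z hz ↦ congrArg Prod.fst hz.2
  rw [two_mul, pow_add, ← ncard_comp_eq hπ z₀.1]
  nth_rw 2 [ncard_comp_eq hπ]
  refine ncard_mul_eq_of_mapsTo hmaps fun x hx ↦ ?_
  have hπx : π ∘ x = z₀.1 := hx
  have hunit : IsUnit (x i) := by
    rw [← isUnit_map_iff π]
    exact IsUnit.mk0 _ ((congrFun hπx i).trans_ne hi)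
  have hfiber : {z ∈ {z ∈ orthogonalPairs ι R | pairMap ι π z = z₀} | z.1 = x} =
      Prod.mk x '' {y | x ⬝ᵥ y = 0 ∧ π ∘ y = z₀.2} := by
    ext ⟨x', y⟩
    simp only [Set.mem_ofPred_eq, Set.mem_image, orthogonalPairs, pairMap_apply,
      Prod.ext_iff]
    constructor
    · rintro ⟨⟨hxy, -, hy⟩, rfl⟩
      exact ⟨y, ⟨hxy, hy⟩, rfl, rfl⟩
    · rintro ⟨y, ⟨hxy, hy⟩, rfl, rfl⟩
      exact ⟨⟨hxy, hπx, hy⟩, rfl⟩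
  rw [hfiber, Set.ncard_image_of_injective _ (Prod.mk_right_injective x)]
  exact ncard_dotProduct_eq_zero_lifts_mul_card_ker hπ hunit (hπx ▸ hz₀)

lemma ncard_orthogonalPairs_lifts_mul_card_ker (hπ : Function.Surjective π)
    {z₀ : (ι → K) × (ι → K)} (hz₀ : z₀ ∈ orthogonalPairs ι K) (hne : z₀ ≠ 0) :
    {z ∈ orthogonalPairs ι R | pairMap ι π z = z₀}.ncard * Nat.card (RingHom.ker π) =
      Nat.card (RingHom.ker π) ^ (2 * Fintype.card ι) := by
  by_cases hfst : z₀.1 = 0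
  · have hsnd : z₀.swap.1 ≠ 0 := fun hsnd ↦ hne (Prod.ext hfst hsnd)
    have hswap : {z ∈ orthogonalPairs ι R | pairMap ι π z = z₀.swap} =
        Prod.swap '' {z ∈ orthogonalPairs ι R | pairMap ι π z = z₀} := by
      ext z
      rw [Set.image_swap_eq_preimage_swap, Set.mem_preimage, Set.mem_ofPred_eq, Set.mem_ofPred_eq,
        swap_mem_orthogonalPairs_iff, ← Prod.swap_inj, Prod.swap_swap]
      rfl
    rw [← ncard_orthogonalPairs_lifts_mul_card_ker_of_fst_ne_zero hπ
      (swap_mem_orthogonalPairs_iff.mpr hz₀) hsnd, hswap,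
      Set.ncard_image_of_injective _ Prod.swap_injective]
  · exact ncard_orthogonalPairs_lifts_mul_card_ker_of_fst_ne_zero hπ hz₀ hfst

lemma ncard_orthogonalPairs_mul_card_ker [Finite K] (hπ : Function.Surjective π) :
    (orthogonalPairs ι R).ncard * Nat.card (RingHom.ker π) +
        Nat.card (RingHom.ker π) ^ (2 * Fintype.card ι) =
      Nat.card (RingHom.ker π) ^ (2 * Fintype.card ι) * (orthogonalPairs ι K).ncard +
        (orthogonalPairsKer ι π).ncard * Nat.card (RingHom.ker π) := by
  have hmaps : Set.MapsTo (pairMap ι π) (orthogonalPairs ι R \ orthogonalPairsKer ι π)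
      (orthogonalPairs ι K \ {0}) := fun z hz ↦
    ⟨pairMap_mem_orthogonalPairs hz.1, fun h ↦ hz.2 ⟨hz.1, h⟩⟩
  have hprimitive := ncard_mul_eq_of_mapsTo (m := Nat.card (RingHom.ker π))
      (n := Nat.card (RingHom.ker π) ^ (2 * Fintype.card ι)) hmaps fun z₀ hz₀ ↦ by
    rw [← ncard_orthogonalPairs_lifts_mul_card_ker hπ hz₀.1 hz₀.2]
    congr 2
    ext z
    simp only [orthogonalPairsKer, Set.mem_ofPred_eq, Set.mem_sdiff, not_and, and_congr_left_iff]
    rintro rfl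
    exact ⟨fun h ↦ h.1, fun h ↦ ⟨h, fun _ ↦ hz₀.2⟩⟩
  have hR := Set.ncard_sdiff_add_ncard_of_subset
    (show orthogonalPairsKer ι π ⊆ orthogonalPairs ι R from fun z hz ↦ hz.1)
  have hK := Set.ncard_sdiff_singleton_add_one (zero_mem_orthogonalPairs (ι := ι) (R := K))
  rw [← hR, ← hK, add_mul, hprimitive]
  ring

lemma ncard_orthogonalPairs_field [Finite K] :
    (orthogonalPairs ι K).ncard * Nat.card K + Nat.card K ^ Fintype.card ι =
      Nat.card K ^ Fintype.card ι * Nat.card K ^ Fintype.card ι +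
      Nat.card K ^ Fintype.card ι * Nat.card K := by
  have hmaps : Set.MapsTo Prod.fst (orthogonalPairs ι K \ {0} ×ˢ Set.univ) ({0}ᶜ : Set (ι → K)) :=
    fun z hz hfst ↦ hz.2 ⟨hfst, trivial⟩
  have hfst_ne : (orthogonalPairs ι K \ {0} ×ˢ Set.univ).ncard * Nat.card K =
      ({0}ᶜ : Set (ι → K)).ncard * Nat.card K ^ Fintype.card ι := by
    refine ncard_mul_eq_of_mapsTo hmaps fun x hx ↦ ?_
    obtain ⟨i, hi⟩ := Function.ne_iff.mp hx
    have hfiber : {z ∈ orthogonalPairs ι K \ {0} ×ˢ Set.univ | z.1 = x} =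
        Prod.mk x '' {y | ∑ j, x j • y j = 0} := by
      ext ⟨x', y⟩
      constructor
      · rintro ⟨⟨hxy, -⟩, rfl⟩
        exact ⟨y, hxy, rfl⟩
      · rintro ⟨y, hxy, rfl, rfl⟩
        exact ⟨⟨hxy, fun h ↦ hx h.1⟩, rfl⟩
    rw [hfiber, Set.ncard_image_of_injective _ (Prod.mk_right_injective x),
      ncard_sum_smul_eq_mul_card (IsUnit.mk0 _ hi)]
  have hsubset : {0} ×ˢ Set.univ ⊆ orthogonalPairs ι K := by
    rintro ⟨_, y⟩ ⟨rfl, -⟩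
    exact zero_dotProduct y
  have hfst_zero := Set.ncard_sdiff_add_ncard_of_subset hsubset
  have hcompl := Set.ncard_add_ncard_compl ({0} : Set (ι → K))
  rw [Set.ncard_prod, Set.ncard_singleton, Set.ncard_univ, Nat.card_fun] at hfst_zero
  rw [Set.ncard_singleton, Nat.card_fun] at hcompl
  rw [Nat.card_eq_fintype_card (α := ι)] at hfst_zero hcompl
  rw [← hfst_zero, add_mul, hfst_ne]
  nth_rw 5 [← hcompl]
  ring

end OrthogonalPairs

section PrimePowers

variable (p k : ℕ)

/-- Reduction modulo `p` on `ZMod (p ^ (k + 1))`. -/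
def reduction : ZMod (p ^ (k + 1)) →+* ZMod p :=
  ZMod.castHom (dvd_pow_self p k.succ_ne_zero) (ZMod p)

lemma reduction_surjective : Function.Surjective (reduction p k) :=
  ZMod.castHom_surjective _

lemma reduction_eq_zero_iff [NeZero p] (a : ZMod (p ^ (k + 1))) :
    reduction p k a = 0 ↔ (p : ZMod (p ^ (k + 1))) ∣ a := by
  constructor
  · intro h
    rw [← ZMod.natCast_zmod_val a, map_natCast, ZMod.natCast_eq_zero_iff] at h
    rw [← ZMod.natCast_zmod_val a]
    exact Nat.cast_dvd_cast h
  · rintro ⟨b, rfl⟩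
    simp

lemma castHom_eq_zero_iff_sq_mul [NeZero p] (a : ZMod (p ^ (k + 2))) :
    ZMod.castHom (pow_dvd_pow p (Nat.le_add_right k 2)) (ZMod (p ^ k)) a = 0 ↔
      (p : ZMod (p ^ (k + 2))) ^ 2 * a = 0 := by
  have hdvd (n : ℕ) : p ^ (k + 2) ∣ p ^ 2 * n ↔ p ^ k ∣ n := by
    rw [add_comm, pow_add, Nat.mul_dvd_mul_iff_left (pow_pos (NeZero.pos p) 2)]
  rw [← ZMod.natCast_zmod_val a, map_natCast, ZMod.natCast_eq_zero_iff, ← Nat.cast_pow,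
    ← Nat.cast_mul, ZMod.natCast_eq_zero_iff, hdvd]

lemma card_ker_reduction [NeZero p] : Nat.card (RingHom.ker (reduction p k)) = p ^ k := by
  have h := ncard_preimage_mul_card (f := (reduction p k).toAddMonoidHom)
    (reduction_surjective p k) {0}
  rw [Nat.card_zmod, Nat.card_zmod, Set.ncard_singleton, mul_one] at h
  exact Nat.eq_of_mul_eq_mul_right (NeZero.pos p) (h.trans (pow_succ p k))

instance [Fact p.Prime] : IsLocalHom (reduction p k) := by
  have : Fact (1 < p ^ (k + 1)) := ⟨Nat.one_lt_pow k.succ_ne_zero (Fact.out : p.Prime).one_lt⟩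
  have : IsLocalRing (ZMod (p ^ (k + 1))) :=
    .of_surjective' (PadicInt.toZModPow (p := p) (k + 1)) (ZMod.ringHom_surjective _)
  exact .of_surjective _ (reduction_surjective p k)

variable (ι : Type*) [Fintype ι]

lemma ncard_orthogonalPairsKer_reduction [NeZero p] :
    (orthogonalPairsKer ι (reduction p (k + 1))).ncard =
      p ^ (2 * Fintype.card ι) * (orthogonalPairs ι (ZMod (p ^ k))).ncard := by
  have h := ncard_orthogonalPairsKer_mul (ι := ι) (reduction_surjective p (k + 1))
    (ZMod.castHom_surjective _) (reduction_eq_zero_iff p (k + 1)) (castHom_eq_zero_iff_sq_mul p k)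
  rw [card_ker_reduction, Nat.card_zmod] at h
  apply Nat.eq_of_mul_eq_mul_right (pow_pos (pow_pos (NeZero.pos p) k) (2 * Fintype.card ι))
  rw [h]
  ring

variable [Fact p.Prime]

lemma ncard_orthogonalPairs_zmod_pow_add_two :
    (orthogonalPairs ι (ZMod (p ^ (k + 2)))).ncard * p ^ (k + 1) +
        (p ^ (k + 1)) ^ (2 * Fintype.card ι) =
      (p ^ (k + 1)) ^ (2 * Fintype.card ι) * (orthogonalPairs ι (ZMod p)).ncard +
        p ^ (2 * Fintype.card ι) * (orthogonalPairs ι (ZMod (p ^ k))).ncard * p ^ (k + 1) := by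
  have h := ncard_orthogonalPairs_mul_card_ker (ι := ι) (π := reduction p (k + 1))
    (reduction_surjective p (k + 1))
  rwa [card_ker_reduction, ncard_orthogonalPairsKer_reduction] at h

lemma ncard_orthogonalPairs_zmod_prime :
    ((orthogonalPairs ι (ZMod p)).ncard : ℝ) * p =
      (p : ℝ) ^ Fintype.card ι * ((p : ℝ) ^ Fintype.card ι + p - 1) := by
  have h := ncard_orthogonalPairs_field (ι := ι) (K := ZMod p)
  rw [Nat.card_zmod] at h
  have h : ((orthogonalPairs ι (ZMod p)).ncard : ℝ) * p + (p : ℝ) ^ Fintype.card ι =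
    (p : ℝ) ^ Fintype.card ι * (p : ℝ) ^ Fintype.card ι + (p : ℝ) ^ Fintype.card ι * p :=
    mod_cast h
  linear_combination h

lemma ncard_orthogonalPairs_zmod_pow :
    (orthogonalPairs ι (ZMod (p ^ k))).ncard * (p : ℝ) ^ k * ((p : ℝ) ^ Fintype.card ι - p) =
      ((p : ℝ) ^ Fintype.card ι) ^ (2 * k) * ((p : ℝ) ^ Fintype.card ι - 1) -
        ((p : ℝ) ^ Fintype.card ι * p) ^ k * (p - 1) := by
  induction k using Nat.twoStepInduction with
  | zero =>
    have : Subsingleton (ZMod (p ^ 0)) := inferInstanceAs (Subsingleton (ZMod 1))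
    have hone : orthogonalPairs ι (ZMod (p ^ 0)) = {0} := Set.eq_singleton_iff_unique_mem.mpr
      ⟨zero_mem_orthogonalPairs, fun _ _ ↦ Subsingleton.elim _ _⟩
    rw [hone, Set.ncard_singleton]
    ring
  | one =>
    rw [pow_one p, pow_one, ncard_orthogonalPairs_zmod_prime]
    ring
  | more k ih _ =>
    have hrec := ncard_orthogonalPairs_zmod_pow_add_two p k ι
    have hrec : ((orthogonalPairs ι (ZMod (p ^ (k + 2)))).ncard : ℝ) * p ^ (k + 1) +
        (p ^ (k + 1)) ^ (2 * Fintype.card ι) =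
      (p ^ (k + 1)) ^ (2 * Fintype.card ι) * (orthogonalPairs ι (ZMod p)).ncard +
        p ^ (2 * Fintype.card ι) * (orthogonalPairs ι (ZMod (p ^ k))).ncard * p ^ (k + 1) :=
      mod_cast hrec
    have hprime := ncard_orthogonalPairs_zmod_prime p ι
    have hQ : ((p : ℝ) ^ (k + 1)) ^ (2 * Fintype.card ι) =
        ((p : ℝ) ^ Fintype.card ι) ^ (2 * (k + 1)) := by ring
    rw [hQ, mul_comm 2 (Fintype.card ι), pow_mul (p : ℝ) (Fintype.card ι)] at hrec
    set Q := (p : ℝ) ^ Fintype.card ι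
    linear_combination (Q - p) * p * hrec + Q ^ 2 * p ^ 2 * ih +
      Q ^ (2 * (k + 1)) * (Q - p) * hprime

end PrimePowers

section MatrixPairs

variable {R K : Type*} [CommRing R] [Field K]

/-- The set `𝒜ᵗ` of pairs of invertible `2 × 2` matrices with equal characteristic polynomials. -/
def eqCharpolyPairs (R : Type*) [CommRing R] : Set (GL (Fin 2) R × GL (Fin 2) R) :=
  {P | (P.1 : Matrix (Fin 2) (Fin 2) R).charpoly = (P.2 : Matrix (Fin 2) (Fin 2) R).charpoly}

/-- Coordinates on pairs of `2 × 2` matrices with equal trace, chosen so that the difference of the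
determinants of the matrices at `(s, x, y)` is `x ⬝ᵥ y`. -/
def eqTracePair (w : R × (Fin 3 → R) × (Fin 3 → R)) :
    Matrix (Fin 2) (Fin 2) R × Matrix (Fin 2) (Fin 2) R :=
  (!![w.1 + w.2.1 0 + w.2.2 0, w.2.1 1; w.2.2 1, w.1],
    !![w.1 + w.2.2 0, w.2.1 2; -w.2.2 2, w.1 + w.2.1 0])

/-- The coordinates in the sense of `eqTracePair`; they do not involve the entry `P.1 0 0`, which
the trace condition determines. -/
def eqTraceCoords (P : Matrix (Fin 2) (Fin 2) R × Matrix (Fin 2) (Fin 2) R) :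
    R × (Fin 3 → R) × (Fin 3 → R) :=
  (P.1 1 1, ![P.2 1 1 - P.1 1 1, P.1 0 1, P.2 0 1], ![P.2 0 0 - P.1 1 1, P.1 1 0, -P.2 1 0])

lemma eqTraceCoords_eqTracePair (w : R × (Fin 3 → R) × (Fin 3 → R)) :
    eqTraceCoords (eqTracePair w) = w := by
  ext i
  · rfl
  all_goals fin_cases i <;> simp [eqTraceCoords, eqTracePair]

lemma eqTracePair_eqTraceCoords {P : Matrix (Fin 2) (Fin 2) R × Matrix (Fin 2) (Fin 2) R}
    (hP : P.1.trace = P.2.trace) : eqTracePair (eqTraceCoords P) = P := by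
  rw [trace_fin_two, trace_fin_two] at hP
  ext i j <;> fin_cases i <;> fin_cases j <;> simp [eqTraceCoords, eqTracePair]
  linear_combination -hP

lemma trace_fst_eqTracePair (w : R × (Fin 3 → R) × (Fin 3 → R)) :
    (eqTracePair w).1.trace = (eqTracePair w).2.trace := by
  simp only [eqTracePair, trace_fin_two_of]
  ring

lemma eqTracePair_injective : Function.Injective (eqTracePair (R := R)) :=
  Function.LeftInverse.injective eqTraceCoords_eqTracePair

lemma det_snd_sub_det_fst_eqTracePair (w : R × (Fin 3 → R) × (Fin 3 → R)) :
    (eqTracePair w).2.det - (eqTracePair w).1.det = w.2.1 ⬝ᵥ w.2.2 := by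
  simp only [eqTracePair, det_fin_two_of, dotProduct, Fin.sum_univ_three]
  ring

lemma charpoly_eq_charpoly_iff_of_fin_two [Nontrivial R] {A B : Matrix (Fin 2) (Fin 2) R} :
    A.charpoly = B.charpoly ↔ A.trace = B.trace ∧ A.det = B.det := by
  refine ⟨fun h ↦ ⟨?_, ?_⟩, fun ⟨htrace, hdet⟩ ↦ ?_⟩
  · rw [trace_eq_neg_charpoly_coeff, h, ← trace_eq_neg_charpoly_coeff]
  · rw [det_eq_sign_charpoly_coeff, h, ← det_eq_sign_charpoly_coeff]
  · rw [charpoly_fin_two, charpoly_fin_two, htrace, hdet]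

/-- The coordinates, in the sense of `eqTracePair`, of the pairs of invertible matrices with equal
trace and determinant. -/
def unitPairs (R : Type*) [CommRing R] : Set (R × (Fin 3 → R) × (Fin 3 → R)) :=
  {w | w.2 ∈ orthogonalPairs (Fin 3) R ∧ IsUnit (eqTracePair w).1.det}

lemma det_fst_eq_det_snd_eqTracePair_iff {w : R × (Fin 3 → R) × (Fin 3 → R)} :
    (eqTracePair w).1.det = (eqTracePair w).2.det ↔ w.2 ∈ orthogonalPairs (Fin 3) R := by
  rw [eq_comm, ← sub_eq_zero, det_snd_sub_det_fst_eqTracePair]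
  rfl

lemma card_eqCharpolyPairs [Nontrivial R] :
    Nat.card (eqCharpolyPairs R) = (unitPairs R).ncard := by
  rw [← Set.ncard_image_of_injective _ eqTracePair_injective, Nat.card_coe_set_eq,
    ← Set.ncard_image_of_injective _ (Units.val_injective.prodMap Units.val_injective)]
  congr 1
  ext P
  constructor
  · rintro ⟨⟨A, B⟩, h, rfl⟩
    obtain ⟨htrace, hdet⟩ := charpoly_eq_charpoly_iff_of_fin_two.mp h
    have hcoords := eqTracePair_eqTraceCoords (P := (A.val, B.val)) htrace
    refine ⟨eqTraceCoords (A, B), ⟨?_, ?_⟩, hcoords⟩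
    · rwa [← det_fst_eq_det_snd_eqTracePair_iff, hcoords]
    · rw [hcoords]
      exact (isUnit_iff_isUnit_det _).mp A.isUnit
  · rintro ⟨w, ⟨horth, hunit⟩, hw⟩
    have hdet := det_fst_eq_det_snd_eqTracePair_iff.mpr horth
    refine ⟨(((isUnit_iff_isUnit_det _).mpr hunit).unit,
      ((isUnit_iff_isUnit_det _).mpr (hdet ▸ hunit)).unit), ?_, hw⟩
    exact charpoly_eq_charpoly_iff_of_fin_two.mpr ⟨trace_fst_eqTracePair w, hdet⟩

lemma isUnit_det_eqTracePair_map_iff {S : Type*} [CommRing S] (f : R →+* S) [IsLocalHom f]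
    (w : R × (Fin 3 → R) × (Fin 3 → R)) :
    IsUnit (eqTracePair (f w.1, pairMap (Fin 3) f w.2)).1.det ↔ IsUnit (eqTracePair w).1.det := by
  rw [← isUnit_map_iff f]
  simp [eqTracePair, pairMap_apply, det_fin_two_of]

variable {π : R →+* K} [IsLocalHom π]

/-- Where `x` and `y` vanish modulo `π`, the determinants are congruent to `s ^ 2`. -/
lemma sep_unitPairs_pairMap_eq_zero :
    {w ∈ unitPairs R | pairMap (Fin 3) π w.2 = 0} =
      {s | IsUnit s} ×ˢ orthogonalPairsKer (Fin 3) π := by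
  ext ⟨s, z⟩
  simp only [unitPairs, orthogonalPairsKer, Set.mem_ofPred_eq, Set.mem_prod]
  have hdet (hz : pairMap (Fin 3) π z = 0) : IsUnit (eqTracePair (s, z)).1.det ↔ IsUnit s := by
    rw [← isUnit_det_eqTracePair_map_iff π, hz, ← isUnit_map_iff π]
    simp [eqTracePair, det_fin_two_of]
  constructor
  · rintro ⟨⟨horth, hunit⟩, hz⟩
    exact ⟨(hdet hz).mp hunit, horth, hz⟩
  · rintro ⟨hunit, horth, hz⟩
    exact ⟨⟨horth, (hdet hz).mpr hunit⟩, hz⟩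

lemma ncard_setOf_isUnit (M : Type*) [Monoid M] : {a : M | IsUnit a}.ncard = Nat.card Mˣ :=
  Set.ncard_range_of_injective Units.val_injective

lemma ncard_unitPairs_lifts_mul_card_ker [Finite R] (hπ : Function.Surjective π)
    {w₀ : K × (Fin 3 → K) × (Fin 3 → K)} (hw₀ : w₀ ∈ unitPairs K) (hne : w₀.2 ≠ 0) :
    {w ∈ unitPairs R | (π w.1, pairMap (Fin 3) π w.2) = w₀}.ncard * Nat.card (RingHom.ker π) =
      Nat.card (RingHom.ker π) ^ 7 := by
  have hprod : {w ∈ unitPairs R | (π w.1, pairMap (Fin 3) π w.2) = w₀} =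
      {s | π s = w₀.1} ×ˢ {z ∈ orthogonalPairs (Fin 3) R | pairMap (Fin 3) π z = w₀.2} := by
    ext w
    simp only [unitPairs, Set.mem_ofPred_eq, Set.mem_prod, Prod.ext_iff (y := w₀)]
    constructor
    · rintro ⟨⟨horth, -⟩, hs, hz⟩
      exact ⟨hs, horth, hz⟩
    · rintro ⟨hs, horth, hz⟩
      refine ⟨⟨horth, ?_⟩, hs, hz⟩
      rw [← isUnit_det_eqTracePair_map_iff π, hs, hz]
      exact hw₀.2
  obtain ⟨s, hs⟩ := hπ w₀.1
  rw [hprod, Set.ncard_prod, mul_assoc, ncard_orthogonalPairs_lifts_mul_card_ker hπ hw₀.1 hne, ← hs]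
  have hfiber : {s' | π s' = π s}.ncard = Nat.card (RingHom.ker π) :=
    ncard_fiber_eq_card_ker π.toAddMonoidHom s
  rw [hfiber, Fintype.card_fin, ← pow_succ']

lemma sep_unitPairs_eq_zero :
    {w ∈ unitPairs K | w.2 = 0} = {s | IsUnit s} ×ˢ {0} := by
  have hker : orthogonalPairsKer (Fin 3) (RingHom.id K) = {0} :=
    Set.eq_singleton_iff_unique_mem.mpr ⟨⟨zero_mem_orthogonalPairs, rfl⟩, fun z hz ↦ hz.2⟩
  rw [← hker]
  exact sep_unitPairs_pairMap_eq_zero (π := RingHom.id K)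

lemma ncard_unitPairs_mul_card_ker [Finite R] [Finite K] (hπ : Function.Surjective π) :
    (unitPairs R).ncard * Nat.card (RingHom.ker π) + Nat.card (RingHom.ker π) ^ 7 * Nat.card Kˣ =
      Nat.card (RingHom.ker π) ^ 7 * (unitPairs K).ncard +
        Nat.card Rˣ * (orthogonalPairsKer (Fin 3) π).ncard * Nat.card (RingHom.ker π) := by
  have hmaps : Set.MapsTo (fun w ↦ (π w.1, pairMap (Fin 3) π w.2))
      (unitPairs R \ {w ∈ unitPairs R | pairMap (Fin 3) π w.2 = 0})
      (unitPairs K \ {w ∈ unitPairs K | w.2 = 0}) := fun w hw ↦ by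
    refine ⟨⟨?_, (isUnit_det_eqTracePair_map_iff π w).mpr hw.1.2⟩, fun h ↦ hw.2 ⟨hw.1, h.2⟩⟩
    exact pairMap_mem_orthogonalPairs hw.1.1
  have hprimitive := ncard_mul_eq_of_mapsTo (m := Nat.card (RingHom.ker π))
      (n := Nat.card (RingHom.ker π) ^ 7) hmaps fun w₀ hw₀ ↦ by
    have hne : w₀.2 ≠ 0 := fun h ↦ hw₀.2 ⟨hw₀.1, h⟩
    rw [← ncard_unitPairs_lifts_mul_card_ker hπ hw₀.1 hne]
    congr 2
    ext w
    simp only [Set.mem_ofPred_eq, Set.mem_sdiff, not_and, and_congr_left_iff]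
    rintro rfl
    exact ⟨fun h ↦ h.1, fun h ↦ ⟨h, fun _ ↦ hne⟩⟩
  have hR := Set.ncard_sdiff_add_ncard_of_subset
    (s := {w ∈ unitPairs R | pairMap (Fin 3) π w.2 = 0}) (t := unitPairs R) (fun w hw ↦ hw.1)
  have hK := Set.ncard_sdiff_add_ncard_of_subset (s := {w ∈ unitPairs K | w.2 = 0})
    (t := unitPairs K) (fun w hw ↦ hw.1)
  rw [← hR, ← hK, add_mul, hprimitive, sep_unitPairs_pairMap_eq_zero, sep_unitPairs_eq_zero,
    Set.ncard_prod, Set.ncard_prod, Set.ncard_singleton, ncard_setOf_isUnit, ncard_setOf_isUnit]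
  ring

end MatrixPairs

section SingularMatrices

variable {K : Type*} [Field K]

/-- The singular `2 × 2` matrices of trace `t`. -/
def singularWithTrace (t : K) : Set (Matrix (Fin 2) (Fin 2) K) :=
  {A | A.trace = t ∧ A.det = 0}

lemma mem_singularWithTrace_iff {t : K} {A : Matrix (Fin 2) (Fin 2) K} :
    A ∈ singularWithTrace t ↔ A 1 1 = t - A 0 0 ∧ A 0 0 * (t - A 0 0) = A 0 1 * A 1 0 := by
  rw [singularWithTrace, Set.mem_ofPred_eq, trace_fin_two, det_fin_two, sub_eq_zero,
    ← eq_sub_iff_add_eq']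
  exact and_congr_right fun h ↦ by rw [h]

lemma ncard_singularWithTrace_of_eq_zero (t : K) :
    {A ∈ singularWithTrace t | A 0 1 = 0}.ncard =
      {a | a * (t - a) = 0}.ncard * Nat.card K := by
  have himage : {A ∈ singularWithTrace t | A 0 1 = 0} =
      (fun v : K × K ↦ !![v.1, 0; v.2, t - v.1]) '' {a | a * (t - a) = 0} ×ˢ Set.univ := by
    ext A
    simp only [Set.mem_ofPred_eq, mem_singularWithTrace_iff, Set.mem_image, Set.mem_prod,
      Set.mem_univ, and_true, Prod.exists]
    constructor
    · rintro ⟨⟨htrace, hdet⟩, hzero⟩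
      refine ⟨A 0 0, A 1 0, by rw [hdet, hzero, zero_mul], ?_⟩
      rw [← htrace, ← hzero, ← eta_fin_two A]
    · rintro ⟨a, c, ha, rfl⟩
      simp [ha]
  have hinj : Function.Injective fun v : K × K ↦ !![v.1, 0; v.2, t - v.1] := fun v w h ↦
    Prod.ext (congrFun₂ h 0 0) (congrFun₂ h 1 0)
  rw [himage, Set.ncard_image_of_injective _ hinj, Set.ncard_prod, Set.ncard_univ]

lemma ncard_singularWithTrace_of_ne_zero (t : K) :
    {A ∈ singularWithTrace t | A 0 1 ≠ 0}.ncard = Nat.card K * Nat.card Kˣ := by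
  have himage : {A ∈ singularWithTrace t | A 0 1 ≠ 0} =
      Set.range fun v : K × Kˣ ↦ !![v.1, ↑v.2; v.1 * (t - v.1) / v.2, t - v.1] := by
    ext A
    simp only [Set.mem_ofPred_eq, mem_singularWithTrace_iff, Set.mem_range, Prod.exists]
    constructor
    · rintro ⟨⟨htrace, hdet⟩, hne⟩
      refine ⟨A 0 0, Units.mk0 _ hne, ?_⟩
      rw [hdet, Units.val_mk0, mul_div_cancel_left₀ _ hne, ← htrace, ← eta_fin_two A]
    · rintro ⟨a, b, rfl⟩
      simp [mul_div_cancel₀]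
  have hinj : Function.Injective
      fun v : K × Kˣ ↦ !![v.1, ↑v.2; v.1 * (t - v.1) / v.2, t - v.1] := fun v w h ↦
    Prod.ext (congrFun₂ h 0 0) (Units.ext (congrFun₂ h 0 1))
  rw [himage, Set.ncard_range_of_injective hinj, Nat.card_prod]

/-- The pairs of singular `2 × 2` matrices with equal trace. -/
def singularPairs (K : Type*) [Field K] :
    Set (Matrix (Fin 2) (Fin 2) K × Matrix (Fin 2) (Fin 2) K) :=
  {P | P.1.trace = P.2.trace ∧ P.1.det = 0 ∧ P.2.det = 0}

lemma sep_singularPairs_trace_eq (t : K) :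
    {P ∈ singularPairs K | P.1.trace = t} = singularWithTrace t ×ˢ singularWithTrace t := by
  ext P
  constructor
  · rintro ⟨⟨htrace, hdet₁, hdet₂⟩, rfl⟩
    exact ⟨⟨rfl, hdet₁⟩, htrace.symm, hdet₂⟩
  · rintro ⟨⟨htrace₁, hdet₁⟩, htrace₂, hdet₂⟩
    exact ⟨⟨htrace₁.trans htrace₂.symm, hdet₁, hdet₂⟩, htrace₁⟩

lemma image_eqTracePair_eq_singularPairs :
    eqTracePair '' {w | w.2 ∈ orthogonalPairs (Fin 3) K ∧ (eqTracePair w).1.det = 0} =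
      singularPairs K := by
  ext P
  constructor
  · rintro ⟨w, ⟨horth, hdet⟩, rfl⟩
    exact ⟨trace_fst_eqTracePair w, hdet,
      hdet ▸ (det_fst_eq_det_snd_eqTracePair_iff.mpr horth).symm⟩
  · rintro ⟨htrace, hdet₁, hdet₂⟩
    have hcoords := eqTracePair_eqTraceCoords htrace
    refine ⟨eqTraceCoords P, ⟨?_, ?_⟩, hcoords⟩
    · rw [← det_fst_eq_det_snd_eqTracePair_iff, hcoords, hdet₁, hdet₂]
    · rw [hcoords, hdet₁]

variable [Finite K]

lemma ncard_singularWithTrace (t : K) :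
    (singularWithTrace t).ncard =
      Nat.card K * (Nat.card Kˣ + {a | a * (t - a) = 0}.ncard) := by
  rw [mul_add, ← ncard_singularWithTrace_of_ne_zero t, mul_comm (Nat.card K),
    ← ncard_singularWithTrace_of_eq_zero t, add_comm]
  exact (Set.ncard_inter_add_ncard_sdiff_eq_ncard (singularWithTrace t) {A | A 0 1 = 0}).symm

lemma ncard_singularWithTrace_zero : (singularWithTrace (0 : K)).ncard = Nat.card K ^ 2 := by
  have hroots : {a : K | a * (0 - a) = 0} = {0} := by
    ext a
    simp
  rw [ncard_singularWithTrace, hroots, Set.ncard_singleton, pow_two,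
    ← Nat.card_eq_card_units_add_one]

lemma ncard_singularWithTrace_ne_zero {t : K} (ht : t ≠ 0) :
    (singularWithTrace t).ncard = Nat.card K ^ 2 + Nat.card K := by
  have hroots : {a : K | a * (t - a) = 0} = {0, t} := by
    ext a
    simp [sub_eq_zero, eq_comm]
  rw [ncard_singularWithTrace, hroots, Set.ncard_pair ht.symm, Nat.card_eq_card_units_add_one K]
  ring

lemma ncard_singularPairs :
    (singularPairs K).ncard =
      Nat.card K ^ 4 + Nat.card Kˣ * (Nat.card K ^ 2 + Nat.card K) ^ 2 := by
  have hmaps : Set.MapsTo (fun P ↦ P.1.trace) (singularPairs K \ {P | P.1.trace = 0})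
      {t | IsUnit t} := fun P hP ↦ IsUnit.mk0 _ hP.2
  have hne := ncard_mul_eq_of_mapsTo (m := 1)
      (n := (Nat.card K ^ 2 + Nat.card K) ^ 2) hmaps fun t ht ↦ by
    rw [mul_one, ← ncard_singularWithTrace_ne_zero ht.ne_zero, pow_two, ← Set.ncard_prod,
      ← sep_singularPairs_trace_eq]
    congr 1
    ext P
    refine ⟨fun h ↦ ⟨h.1.1, h.2⟩, fun h ↦ ⟨⟨h.1, ?_⟩, h.2⟩⟩
    exact fun hzero ↦ ht.ne_zero (h.2.symm.trans hzero)
  have hzero : (singularPairs K ∩ {P | P.1.trace = 0}).ncard = Nat.card K ^ 4 := by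
    change {P ∈ singularPairs K | P.1.trace = 0}.ncard = _
    rw [sep_singularPairs_trace_eq, Set.ncard_prod, ncard_singularWithTrace_zero, ← pow_add]
  rw [← Set.ncard_inter_add_ncard_sdiff_eq_ncard (singularPairs K) {P | P.1.trace = 0}, hzero,
    ← ncard_setOf_isUnit, ← hne, mul_one]

lemma ncard_unitPairs_add_ncard_singularPairs :
    (unitPairs K).ncard + (singularPairs K).ncard =
      Nat.card K * (orthogonalPairs (Fin 3) K).ncard := by
  rw [← Set.ncard_univ, ← Set.ncard_prod, ← image_eqTracePair_eq_singularPairs,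
    Set.ncard_image_of_injective _ eqTracePair_injective, add_comm,
    ← Set.ncard_inter_add_ncard_sdiff_eq_ncard (Set.univ ×ˢ orthogonalPairs (Fin 3) K)
      {w | (eqTracePair w).1.det = 0}]
  congr 2
  · ext w
    simp
  · ext w
    simp [unitPairs]

lemma ncard_unitPairs_zmod_prime (p : ℕ) [Fact p.Prime] :
    ((unitPairs (ZMod p)).ncard : ℝ) = p ^ 6 - p ^ 5 - p ^ 4 + p ^ 2 := by
  have hunits := Nat.card_eq_card_units_add_one (ZMod p)
  have hsing := ncard_singularPairs (K := ZMod p)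
  have hsum := ncard_unitPairs_add_ncard_singularPairs (K := ZMod p)
  rw [Nat.card_zmod] at hunits hsing hsum
  have horth := ncard_orthogonalPairs_zmod_prime p (Fin 3)
  rw [Fintype.card_fin] at horth
  have hunits : (p : ℝ) = Nat.card (ZMod p)ˣ + 1 := mod_cast hunits
  have hsum : ((unitPairs (ZMod p)).ncard : ℝ) + (p ^ 4 + Nat.card (ZMod p)ˣ * (p ^ 2 + p) ^ 2) =
      p * (orthogonalPairs (Fin 3) (ZMod p)).ncard := mod_cast hsing ▸ hsum
  linear_combination hsum + horth + (p ^ 2 + p : ℝ) ^ 2 * hunits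

end SingularMatrices

section Cardinalities

/-- The set `𝒜` of pairs of invertible `2 × 2` matrices with equal determinants. -/
def eqDetPairs (R : Type*) [CommRing R] : Set (GL (Fin 2) R × GL (Fin 2) R) :=
  {P | (P.1 : Matrix (Fin 2) (Fin 2) R).det = (P.2 : Matrix (Fin 2) (Fin 2) R).det}

lemma card_units_mul_card {A B : Type*} [Ring A] [Ring B] [Finite A] [Finite B] {f : A →+* B}
    [IsLocalHom f] (hf : Function.Surjective f) :
    Nat.card Aˣ * Nat.card B = Nat.card A * Nat.card Bˣ := by
  have hpreimage : {a | IsUnit a} = f.toAddMonoidHom ⁻¹' {b | IsUnit b} :=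
    Set.ext fun a ↦ (isUnit_map_iff f a).symm
  rw [← ncard_setOf_isUnit, ← ncard_setOf_isUnit, hpreimage]
  exact ncard_preimage_mul_card hf _

lemma card_map_eq_map_mul_card {G H : Type*} [Group G] [CommGroup H] [Finite G] {f : G →* H}
    (hf : Function.Surjective f) :
    Nat.card {p : G × G | f p.1 = f p.2} * Nat.card H = Nat.card G ^ 2 := by
  let d : G × G →* H := f.comp (.fst G G) / f.comp (.snd G G)
  have hd : d.range = ⊤ := MonoidHom.range_eq_top.mpr fun b ↦ by
    obtain ⟨a, rfl⟩ := hf b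
    exact ⟨(a, 1), by simp [d]⟩
  have hker : {p : G × G | f p.1 = f p.2} = (d.ker : Set (G × G)) := by
    ext p
    simp [d, MonoidHom.mem_ker, div_eq_one]
  have hcard := d.ker.card_mul_index
  rw [Subgroup.index_ker, hd, Subgroup.card_top, Nat.card_prod, ← pow_two] at hcard
  rw [hker]
  exact hcard

lemma card_eqDetPairs_mul_card_units (R : Type*) [CommRing R] [Finite R] :
    Nat.card (eqDetPairs R) * Nat.card Rˣ = Nat.card (GL (Fin 2) R) ^ 2 := by
  rw [← card_map_eq_map_mul_card (GeneralLinearGroup.det_surjective (n := Fin 2) (R := R))]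
  simp only [eqDetPairs, Units.ext_iff, GeneralLinearGroup.val_det_apply]

instance {R S n : Type*} [CommRing R] [CommRing S] [Fintype n] [DecidableEq n] (f : R →+* S)
    [IsLocalHom f] : IsLocalHom (f.mapMatrix (m := n)) where
  map_nonunit A hA := by
    rw [isUnit_iff_isUnit_det, ← RingHom.map_det, isUnit_map_iff] at hA
    exact (isUnit_iff_isUnit_det A).mpr hA

variable (p k : ℕ) [Fact p.Prime]

lemma card_units_zmod_prime_pow : (Nat.card (ZMod (p ^ (k + 1)))ˣ : ℝ) = p ^ k * (p - 1) := by
  rw [Nat.card_eq_fintype_card, ZMod.card_units_eq_totient,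
    Nat.totient_prime_pow_succ Fact.out, Nat.cast_mul, Nat.cast_pow,
    Nat.cast_pred (Nat.Prime.pos Fact.out)]

lemma card_GL_two_zmod_prime_pow :
    (Nat.card (GL (Fin 2) (ZMod (p ^ (k + 1)))) : ℝ) =
      p ^ (4 * k) * ((p ^ 2 - 1) * (p ^ 2 - p)) := by
  have hlift := card_units_mul_card (f := (reduction p k).mapMatrix (m := Fin 2))
    (reduction_surjective p k).comp_left.comp_left
  have hcard (n : ℕ) : Nat.card (Matrix (Fin 2) (Fin 2) (ZMod n)) = n ^ 4 := by
    rw [Matrix, Nat.card_fun, Nat.card_fun, Nat.card_fin, Nat.card_zmod, ← pow_mul]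
  have hp : 1 ≤ p := NeZero.one_le
  have hfield : (Nat.card (GL (Fin 2) (ZMod p)) : ℝ) = (p ^ 2 - 1) * (p ^ 2 - p) := by
    rw [card_GL_field, ZMod.card, Fin.prod_univ_two, Nat.cast_mul, Nat.cast_sub, Nat.cast_sub]
    · simp
    · exact Nat.pow_le_pow_right hp one_le_two
    · exact Nat.pow_le_pow_right hp zero_le_two
  rw [hcard, hcard] at hlift
  have hlift : (Nat.card (GL (Fin 2) (ZMod (p ^ (k + 1)))) : ℝ) * p ^ 4 =
      (p ^ (k + 1)) ^ 4 * Nat.card (GL (Fin 2) (ZMod p)) := mod_cast hlift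
  have hp_ne : (p : ℝ) ^ 4 ≠ 0 := pow_ne_zero 4 (Nat.cast_ne_zero.mpr (NeZero.ne p))
  apply mul_right_cancel₀ hp_ne
  rw [hlift, hfield]
  ring

lemma card_eqDetPairs_zmod_prime_pow :
    (Nat.card (eqDetPairs (ZMod (p ^ (k + 1)))) : ℝ) =
      p ^ (7 * k) * (p ^ 2 * (p ^ 2 - 1) ^ 2 * (p - 1)) := by
  have hcard := card_eqDetPairs_mul_card_units (ZMod (p ^ (k + 1)))
  rw [← @Nat.cast_inj ℝ, Nat.cast_mul, Nat.cast_pow, card_GL_two_zmod_prime_pow,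
    card_units_zmod_prime_pow] at hcard
  have hp : (1 : ℝ) < p := mod_cast (Fact.out : p.Prime).one_lt
  have hunits_ne : (p : ℝ) ^ k * (p - 1) ≠ 0 := by positivity
  apply mul_right_cancel₀ hunits_ne
  rw [hcard]
  ring

lemma card_eqCharpolyPairs_zmod_prime_pow_add_two :
    (Nat.card (eqCharpolyPairs (ZMod (p ^ (k + 2)))) : ℝ) =
      p ^ (6 * (k + 1)) * ((p - 1) * (p ^ 5 - p ^ 3 - p ^ 2 - 1 +
        p * ((orthogonalPairs (Fin 3) (ZMod (p ^ k))).ncard / p ^ (5 * k)))) := by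
  have : Fact (1 < p ^ (k + 2)) := ⟨Nat.one_lt_pow (by simp) (Fact.out : p.Prime).one_lt⟩
  have hp_ne : (p : ℝ) ≠ 0 := Nat.cast_ne_zero.mpr (NeZero.ne p)
  have hunits := card_units_zmod_prime_pow p 0
  rw [zero_add, pow_one, pow_zero, one_mul] at hunits
  have h := ncard_unitPairs_mul_card_ker (reduction_surjective p (k + 1))
  rw [card_ker_reduction, ncard_orthogonalPairsKer_reduction, Fintype.card_fin,
    ← @Nat.cast_inj ℝ] at h
  push_cast at h
  rw [card_units_zmod_prime_pow p (k + 1), ncard_unitPairs_zmod_prime p, hunits] at h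
  rw [card_eqCharpolyPairs]
  field_simp
  have hker_ne : (p : ℝ) ^ (k + 1) ≠ 0 := pow_ne_zero _ hp_ne
  apply mul_right_cancel₀ hker_ne
  linear_combination (p : ℝ) ^ (5 * k) * h

lemma tendsto_ncard_orthogonalPairs_div :
    Tendsto (fun k ↦ ((orthogonalPairs (Fin 3) (ZMod (p ^ k))).ncard : ℝ) / p ^ (5 * k)) atTop
      (nhds (((p : ℝ) ^ 3 - 1) / (p ^ 3 - p))) := by
  have hp : (1 : ℝ) < p := mod_cast (Fact.out : p.Prime).one_lt
  have hclosed (k : ℕ) : ((orthogonalPairs (Fin 3) (ZMod (p ^ k))).ncard : ℝ) / p ^ (5 * k) =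
      ((p : ℝ) ^ 3 - 1 - ((p : ℝ) ^ 2)⁻¹ ^ k * (p - 1)) / (p ^ 3 - p) := by
    have h := ncard_orthogonalPairs_zmod_pow p k (Fin 3)
    rw [Fintype.card_fin] at h
    have hp_ne : (p : ℝ) ^ 3 - p ≠ 0 := by
      rw [show (p : ℝ) ^ 3 - p = p * (p ^ 2 - 1) by ring]
      have := sub_pos.mpr (one_lt_pow₀ hp two_ne_zero)
      positivity
    rw [div_eq_div_iff (by positivity) hp_ne, inv_pow]
    field_simp
    linear_combination (p : ℝ) ^ k * h
  have hgeom := tendsto_pow_atTop_nhds_zero_of_lt_one (r := ((p : ℝ) ^ 2)⁻¹) (by positivity)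
    (inv_lt_one_of_one_lt₀ (one_lt_pow₀ hp two_ne_zero))
  simp_rw [hclosed]
  simpa using
    ((hgeom.mul_const ((p : ℝ) - 1)).const_sub ((p : ℝ) ^ 3 - 1)).div_const ((p : ℝ) ^ 3 - p)

lemma pow_mul_card_eqCharpolyPairs_div_card_eqDetPairs :
    (p : ℝ) ^ (k + 2) * (Nat.card (eqCharpolyPairs (ZMod (p ^ (k + 2)))) : ℝ) /
        (Nat.card (eqDetPairs (ZMod (p ^ (k + 2)))) : ℝ) =
      (p ^ 5 - p ^ 3 - p ^ 2 - 1 +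
        p * ((orthogonalPairs (Fin 3) (ZMod (p ^ k))).ncard / p ^ (5 * k))) /
        (p * (p ^ 2 - 1) ^ 2) := by
  have hp : (1 : ℝ) < p := mod_cast (Fact.out : p.Prime).one_lt
  have hsq_sub : (p : ℝ) ^ 2 - 1 ≠ 0 := sub_ne_zero.mpr (one_lt_pow₀ hp two_ne_zero).ne'
  rw [card_eqCharpolyPairs_zmod_prime_pow_add_two, card_eqDetPairs_zmod_prime_pow p (k + 1),
    div_eq_div_iff (by positivity) (by positivity)]
  ring

end Cardinalities

theorem stmt_7_general (ℓ : ℕ) (hℓ : ℓ.Prime) :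
    Tendsto (fun k : ℕ =>
      ((ℓ : ℝ) ^ k *
        (Nat.card {p : GL (Fin 2) (ZMod (ℓ ^ k)) × GL (Fin 2) (ZMod (ℓ ^ k)) |
          Matrix.charpoly (p.1 : Matrix (Fin 2) (Fin 2) (ZMod (ℓ ^ k))) =
            Matrix.charpoly (p.2 : Matrix (Fin 2) (Fin 2) (ZMod (ℓ ^ k)))} : ℝ)) /
        (Nat.card {p : GL (Fin 2) (ZMod (ℓ ^ k)) × GL (Fin 2) (ZMod (ℓ ^ k)) |
          (p.1 : Matrix (Fin 2) (Fin 2) (ZMod (ℓ ^ k))).det =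
            (p.2 : Matrix (Fin 2) (Fin 2) (ZMod (ℓ ^ k))).det} : ℝ))
      atTop
      (nhds ((ℓ : ℝ) ^ 2 * ((ℓ : ℝ) ^ 3 + (ℓ : ℝ) ^ 2 - ℓ - 2) /
        ((((ℓ : ℝ) ^ 2 - 1)) ^ 2 * ((ℓ : ℝ) + 1)))) := by
  have : Fact ℓ.Prime := ⟨hℓ⟩
  have hℓ_one : (1 : ℝ) < ℓ := mod_cast hℓ.one_lt
  have hℓ_sub : (ℓ : ℝ) - 1 ≠ 0 := sub_ne_zero.mpr hℓ_one.ne'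
  have hlimit : ((ℓ : ℝ) ^ 5 - ℓ ^ 3 - ℓ ^ 2 - 1 + ℓ * ((ℓ ^ 3 - 1) / (ℓ ^ 3 - ℓ))) /
      (ℓ * (ℓ ^ 2 - 1) ^ 2) =
      ℓ ^ 2 * (ℓ ^ 3 + ℓ ^ 2 - ℓ - 2) / ((ℓ ^ 2 - 1) ^ 2 * (ℓ + 1)) := by
    rw [show (ℓ : ℝ) ^ 3 - ℓ = ℓ * (ℓ - 1) * (ℓ + 1) by ring,
      show (ℓ : ℝ) ^ 2 - 1 = (ℓ - 1) * (ℓ + 1) by ring]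
    field_simp
    ring
  rw [← hlimit, ← tendsto_add_atTop_iff_nat 2]
  exact ((((tendsto_ncard_orthogonalPairs_div ℓ).const_mul _).const_add _).div_const _).congr
    fun k ↦ (pow_mul_card_eqCharpolyPairs_div_card_eqDetPairs ℓ k).symm

/-- For an odd prime `ℓ`, the real sequence `k ↦ ℓᵏ · #𝒜ᵗ_{ℓᵏ,S} / #𝒜_{ℓᵏ,S}`
converges to `ℓ²(ℓ³ + ℓ² − ℓ − 2)/((ℓ² − 1)²(ℓ + 1))`. -/
theorem stmt_7 (ℓ : ℕ) (hℓ : ℓ.Prime) (hodd : ℓ ≠ 2) :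
    Tendsto (fun k : ℕ =>
      ((ℓ : ℝ) ^ k *
        (Nat.card {p : GL (Fin 2) (ZMod (ℓ ^ k)) × GL (Fin 2) (ZMod (ℓ ^ k)) |
          Matrix.charpoly (p.1 : Matrix (Fin 2) (Fin 2) (ZMod (ℓ ^ k))) =
            Matrix.charpoly (p.2 : Matrix (Fin 2) (Fin 2) (ZMod (ℓ ^ k)))} : ℝ)) /
        (Nat.card {p : GL (Fin 2) (ZMod (ℓ ^ k)) × GL (Fin 2) (ZMod (ℓ ^ k)) |
          (p.1 : Matrix (Fin 2) (Fin 2) (ZMod (ℓ ^ k))).det =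
            (p.2 : Matrix (Fin 2) (Fin 2) (ZMod (ℓ ^ k))).det} : ℝ))
      atTop
      (nhds ((ℓ : ℝ) ^ 2 * ((ℓ : ℝ) ^ 3 + (ℓ : ℝ) ^ 2 - ℓ - 2) /
        ((((ℓ : ℝ) ^ 2 - 1)) ^ 2 * ((ℓ : ℝ) + 1)))) :=
  stmt_7_general ℓ hℓ
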